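/- The down-walk transition matrix P^{down} and the harmonic-walk transition matrix P on S_k = X_k^± ∪ {Θ} are row-stochastic: every entry lies in [0,1] and every row sums to 1. -/

import Mathlib

open BigOperators Matrix Kronecker

attribute [local instance] Classical.propDecidable

noncomputable section

namespace QWSC

/-- A finite abstract simplicial complex on the vertex set `Fin n`:
a family of vertex sets closed under taking subsets. -/
def IsComplex (n : ℕ) (X : Finset (Finset (Fin n))) : Prop :=
  ∀ s ∈ X, ∀ t ⊆ s, t ∈ X

/-- The weighted boundary operator `∂_k : C_k → C_{k-1}` written as a matrix in the
orthonormal chain bases (rows are indexed by `(k-1)`-simplices, columns by `k`-simplices;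
a `k`-simplex has `k+1` vertices).  On the orthonormal basis vector of
`σ = {v_0 < … < v_k}` it has entries `(-1)^j w(v_j)` at the face `σ \ {v_j}`. -/
def boundary (n : ℕ) (X : Finset (Finset (Fin n))) (w : Fin n → ℝ) (k : ℕ) :
    Matrix (Finset (Fin n)) (Finset (Fin n)) ℝ :=
  Matrix.of fun τ σ =>
    if σ ∈ X ∧ σ.card = k + 1 ∧ τ ⊆ σ ∧ τ.card = k then
      ∑ v ∈ σ \ τ, (-1 : ℝ) ^ ((σ.filter fun u => u < v).card) * w v
    else 0

/-- The weighted up Laplacian `Δ_k^{up} = ∂_{k+1} ∂_{k+1}^*`. -/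
def upLap (n : ℕ) (X : Finset (Finset (Fin n))) (w : Fin n → ℝ) (k : ℕ) :
    Matrix (Finset (Fin n)) (Finset (Fin n)) ℝ :=
  boundary n X w (k + 1) * (boundary n X w (k + 1))ᵀ

/-- The weighted down Laplacian `Δ_k^{down} = ∂_k^* ∂_k`. -/
def downLap (n : ℕ) (X : Finset (Finset (Fin n))) (w : Fin n → ℝ) (k : ℕ) :
    Matrix (Finset (Fin n)) (Finset (Fin n)) ℝ :=
  (boundary n X w k)ᵀ * boundary n X w k

/-- The weighted combinatorial Laplacian `Δ_k = Δ_k^{up} + Δ_k^{down}`. -/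
def fullLap (n : ℕ) (X : Finset (Finset (Fin n))) (w : Fin n → ℝ) (k : ℕ) :
    Matrix (Finset (Fin n)) (Finset (Fin n)) ℝ :=
  upLap n X w k + downLap n X w k

/-- `true` iff removing the vertex `v` from `σ` reverses the induced orientation,
i.e. the position of `v` in the increasing ordering of `σ` is odd. -/
def faceFlip (n : ℕ) (σ : Finset (Fin n)) (v : Fin n) : Bool :=
  decide ((σ.filter fun u => u < v).card % 2 = 1)

/-- An oriented simplex: a vertex set together with an orientation bit
(`false` = positively oriented, `true` = negatively oriented). -/
abbrev OSimp (n : ℕ) := Finset (Fin n) × Bool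

/-- Up-adjacency `σ ∼↑ σ'` of oriented simplices: the vertex sets are distinct, their
union is a common coface belonging to `X`, and the orientations induced on the common
coface by `σ` and by `σ'` agree. -/
def UpAdj (n : ℕ) (X : Finset (Finset (Fin n))) (σ σ' : OSimp n) : Prop :=
  σ.1 ≠ σ'.1 ∧ σ.1 ∪ σ'.1 ∈ X ∧ (σ.1 ∪ σ'.1).card = σ.1.card + 1 ∧
    σ'.1.card = σ.1.card ∧
    ∀ v ∈ σ'.1 \ σ.1, ∀ v' ∈ σ.1 \ σ'.1,
      xor σ.2 (faceFlip n (σ.1 ∪ σ'.1) v) = xor σ'.2 (faceFlip n (σ.1 ∪ σ'.1) v')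

/-- Down-adjacency `σ ∼↓ σ'` of oriented simplices: the vertex sets are distinct, they
share a common face (their intersection, of cardinality one less), and the orientations
induced on the common face by `σ` and by `σ'` agree. -/
def DownAdj (n : ℕ) (σ σ' : OSimp n) : Prop :=
  σ.1 ≠ σ'.1 ∧ (σ.1 ∩ σ'.1).card + 1 = σ.1.card ∧ σ'.1.card = σ.1.card ∧
    ∀ v ∈ σ.1 \ σ'.1, ∀ v' ∈ σ'.1 \ σ.1,
      xor σ.2 (faceFlip n σ.1 v) = xor σ'.2 (faceFlip n σ'.1 v')

/-- `up(σ)`: the vertices `u ∉ σ` with `σ ∪ {u} ∈ X`. -/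
def upSet (n : ℕ) (X : Finset (Finset (Fin n))) (σ : Finset (Fin n)) : Finset (Fin n) :=
  Finset.univ.filter fun u => u ∉ σ ∧ insert u σ ∈ X

/-- The set of `k`-simplices of `X` (those with `k+1` vertices). -/
def simplices (n : ℕ) (X : Finset (Finset (Fin n))) (k : ℕ) : Finset (Finset (Fin n)) :=
  X.filter fun s => s.card = k + 1

/-- Normalization constant `K^{up} = max_{σ∈X_k} Σ_{u∈V∖σ} Σ_{v∈σ∪{u}} w(u)w(v)`. -/
def Kup (n : ℕ) (X : Finset (Finset (Fin n))) (w : Fin n → ℝ) (k : ℕ) : ℝ :=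
  sSup {x : ℝ | ∃ σ ∈ X, σ.card = k + 1 ∧ x = ∑ u ∈ σᶜ, ∑ v ∈ insert u σ, w u * w v}

/-- Normalization constant `K^{down} = max_{σ∈X_k} Σ_{u∈σ} Σ_{v∈V∖(σ∖{u})} w(u)w(v)`. -/
def Kdown (n : ℕ) (X : Finset (Finset (Fin n))) (w : Fin n → ℝ) (k : ℕ) : ℝ :=
  sSup {x : ℝ | ∃ σ ∈ X, σ.card = k + 1 ∧ x = ∑ u ∈ σ, ∑ v ∈ (σ.erase u)ᶜ, w u * w v}

/-- Normalization constant `K = max_{σ∈X_k} (Σ_{v∈V} w(v)² + Σ_{u∈V∖σ} Σ_{v∈σ} w(u)w(v))`. -/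
def Kfull (n : ℕ) (X : Finset (Finset (Fin n))) (w : Fin n → ℝ) (k : ℕ) : ℝ :=
  sSup {x : ℝ | ∃ σ ∈ X, σ.card = k + 1 ∧
    x = (∑ v : Fin n, w v ^ 2) + ∑ u ∈ σᶜ, ∑ v ∈ σ, w u * w v}

/-- The `k`-th chain space `C_k`: the span of the basis vectors indexed by
`k`-simplices of `X`, inside the coordinate space of the orthonormal chain basis. -/
def chainSpace (n : ℕ) (X : Finset (Finset (Fin n))) (k : ℕ) :
    Submodule ℝ (Finset (Fin n) → ℝ) :=
  Submodule.span ℝ ((fun σ => Pi.single σ (1 : ℝ)) '' {σ | σ ∈ X ∧ σ.card = k + 1})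

/-- The state space `S_k = X_k^± ∪ {Θ}` of the walks; `none` is the absorbing state `Θ`. -/
abbrev SState (n : ℕ) := Option (OSimp n)

/-- A state is a member of `S_k`: either the absorbing state, or an oriented
`k`-simplex of `X`. -/
def valid (n : ℕ) (X : Finset (Finset (Fin n))) (k : ℕ) : SState n → Prop
  | none => True
  | some σ => σ.1 ∈ X ∧ σ.1.card = k + 1

/-- `η^{up}_σ = 1 − (1/K^{up}) Σ_{τ∈X_k^+} |(Δ_k^{up})_{τ,σ_+}|`. -/
def etaUp (n : ℕ) (X : Finset (Finset (Fin n))) (w : Fin n → ℝ) (k : ℕ) (σ : OSimp n) : ℝ :=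
  1 - (∑ τ ∈ simplices n X k, |upLap n X w k τ σ.1|) / Kup n X w k

/-- `η^{down}_σ = 1 − (1/K^{down}) Σ_{τ∈X_k^+} |(Δ_k^{down})_{τ,σ_+}|`. -/
def etaDown (n : ℕ) (X : Finset (Finset (Fin n))) (w : Fin n → ℝ) (k : ℕ) (σ : OSimp n) : ℝ :=
  1 - (∑ τ ∈ simplices n X k, |downLap n X w k τ σ.1|) / Kdown n X w k

/-- `η_σ = 1 − (1/K) Σ_{τ∈X_k^+} |(Δ_k)_{τ,σ_+}|`. -/
def etaFull (n : ℕ) (X : Finset (Finset (Fin n))) (w : Fin n → ℝ) (k : ℕ) (σ : OSimp n) : ℝ :=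
  1 - (∑ τ ∈ simplices n X k, |fullLap n X w k τ σ.1|) / Kfull n X w k

/-- The up-walk transition matrix `P^{up}` on `S_k`. -/
def Pup (n : ℕ) (X : Finset (Finset (Fin n))) (w : Fin n → ℝ) (k : ℕ) :
    SState n → SState n → ℝ
  | some σ, some σ' =>
      if σ.1 ∈ X ∧ σ.1.card = k + 1 ∧ σ'.1 ∈ X ∧ σ'.1.card = k + 1 then
        if σ = σ' then (∑ u ∈ upSet n X σ.1, w u ^ 2) / Kup n X w k
        else if UpAdj n X σ σ' then
          ((∑ v ∈ σ.1 \ σ'.1, w v) * (∑ v ∈ σ'.1 \ σ.1, w v)) / Kup n X w k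
        else 0
      else 0
  | some σ, none => if σ.1 ∈ X ∧ σ.1.card = k + 1 then etaUp n X w k σ else 0
  | none, none => 1
  | none, some _ => 0

/-- The down-walk transition matrix `P^{down}` on `S_k`. -/
def Pdown (n : ℕ) (X : Finset (Finset (Fin n))) (w : Fin n → ℝ) (k : ℕ) :
    SState n → SState n → ℝ
  | some σ, some σ' =>
      if σ.1 ∈ X ∧ σ.1.card = k + 1 ∧ σ'.1 ∈ X ∧ σ'.1.card = k + 1 then
        if σ = σ' then (∑ v ∈ σ.1, w v ^ 2) / Kdown n X w k
        else if DownAdj n σ σ' then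
          ((∑ v ∈ σ.1 \ σ'.1, w v) * (∑ v ∈ σ'.1 \ σ.1, w v)) / Kdown n X w k
        else 0
      else 0
  | some σ, none => if σ.1 ∈ X ∧ σ.1.card = k + 1 then etaDown n X w k σ else 0
  | none, none => 1
  | none, some _ => 0

/-- The harmonic-walk transition matrix `P` on `S_k`. -/
def Pharm (n : ℕ) (X : Finset (Finset (Fin n))) (w : Fin n → ℝ) (k : ℕ) :
    SState n → SState n → ℝ
  | some σ, some σ' =>
      if σ.1 ∈ X ∧ σ.1.card = k + 1 ∧ σ'.1 ∈ X ∧ σ'.1.card = k + 1 then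
        if σ = σ' then
          ((∑ u ∈ upSet n X σ.1, w u ^ 2) + ∑ v ∈ σ.1, w v ^ 2) / Kfull n X w k
        else if DownAdj n σ σ' ∧ ¬ UpAdj n X σ (σ'.1, !σ'.2) then
          ((∑ v ∈ σ.1 \ σ'.1, w v) * (∑ v ∈ σ'.1 \ σ.1, w v)) / Kfull n X w k
        else 0
      else 0
  | some σ, none => if σ.1 ∈ X ∧ σ.1.card = k + 1 then etaFull n X w k σ else 0
  | none, none => 1
  | none, some _ => 0

/-! ### Quantum encodings -/

/-- The computational basis of `(ℂ²)^{⊗(n+2)}`: `n` membership qubits, one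
orientation qubit, and one qubit flagging the absorbing state. -/
abbrev QIdx (n : ℕ) := (Fin n → Bool) × Bool × Bool

/-- The encoding of states of `S_k` as computational basis states:
`|σ⟩ = |x_σ⟩|s(σ)⟩|0⟩` and `|Θ⟩ = |0^n⟩|0⟩|1⟩`. -/
def encode (n : ℕ) : SState n → QIdx n
  | none => (fun _ => false, false, true)
  | some σ => (fun i => decide (i ∈ σ.1), σ.2, false)

/-- The all-zeros basis state `|0^{n+2}⟩`. -/
def zeroQ (n : ℕ) : QIdx n := (fun _ => false, false, false)

/-- The projector `Π_k^±` onto the span of the encoded oriented `k`-simplices of `X`. -/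
def PiPM (n : ℕ) (X : Finset (Finset (Fin n))) (k : ℕ) : Matrix (QIdx n) (QIdx n) ℂ :=
  Matrix.of fun p q =>
    if p = q ∧ ∃ σ : OSimp n, σ.1 ∈ X ∧ σ.1.card = k + 1 ∧ p = encode n (some σ) then 1 else 0

/-- The projector `Π_k` onto the span of the encoded positively oriented
`k`-simplices of `X`. -/
def PiK (n : ℕ) (X : Finset (Finset (Fin n))) (k : ℕ) : Matrix (QIdx n) (QIdx n) ℂ :=
  Matrix.of fun p q =>
    if p = q ∧ ∃ s ∈ X, s.card = k + 1 ∧ p = encode n (some (s, false)) then 1 else 0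

/-- Decode a basis state into the state of `S_k` it represents (if any). -/
def decodeQ (n : ℕ) : QIdx n → Option (SState n) := fun q =>
  if q.2.2 = false then some (some ((Finset.univ.filter fun i => q.1 i = true), q.2.1))
  else if q = encode n none then some none else none

/-- Identify a transition kernel `P` on `S_k` with the operator on `(ℂ²)^{⊗(n+2)}`
having `⟨σ'|P|σ⟩ = P_{σ,σ'}` for `σ, σ' ∈ S_k`, vanishing off the span of `S_k`. -/
def toQMat (n : ℕ) (P : SState n → SState n → ℝ) : Matrix (QIdx n) (QIdx n) ℂ :=
  Matrix.of fun q' q =>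
    match decodeQ n q, decodeQ n q' with
    | some σ, some σ' => (P σ σ' : ℂ)
    | _, _ => 0

/-- Identify a matrix indexed by vertex sets (acting on the chain space in the
orthonormal basis of positively oriented simplices) with an operator on
`(ℂ²)^{⊗(n+2)}` supported on the encoded positively oriented simplices. -/
def lapQ (n : ℕ) (L : Matrix (Finset (Fin n)) (Finset (Fin n)) ℝ) :
    Matrix (QIdx n) (QIdx n) ℂ :=
  Matrix.of fun q' q =>
    if q'.2.1 = false ∧ q'.2.2 = false ∧ q.2.1 = false ∧ q.2.2 = false then
      (L (Finset.univ.filter fun i => q'.1 i = true)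
         (Finset.univ.filter fun i => q.1 i = true) : ℂ)
    else 0

/-- The SWAP unitary exchanging the two `(n+2)`-qubit registers. -/
def swapMat (n : ℕ) : Matrix (QIdx n × QIdx n) (QIdx n × QIdx n) ℂ :=
  Matrix.of fun p q => if p.1 = q.2 ∧ p.2 = q.1 then 1 else 0

/-- The compression `(· ⊗ ⟨0^{n+2}|) W (· ⊗ |0^{n+2}⟩)` of an operator on two
`(n+2)`-qubit registers to the first register. -/
def compress (n : ℕ) (W : Matrix (QIdx n × QIdx n) (QIdx n × QIdx n) ℂ) :
    Matrix (QIdx n) (QIdx n) ℂ :=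
  Matrix.of fun q' q => W (q', zeroQ n) (q, zeroQ n)

/-- The compression `(· ⊗ ⟨0^α|) W (· ⊗ |0^α⟩)` of an operator on the system
register together with an `α`-qubit ancilla register. -/
def compressA (n α : ℕ) (W : Matrix (QIdx n × (Fin α → Bool)) (QIdx n × (Fin α → Bool)) ℂ) :
    Matrix (QIdx n) (QIdx n) ℂ :=
  Matrix.of fun q' q => W (q', fun _ => false) (q, fun _ => false)

/-- The gate `I^{⊗n} ⊗ (HZ) ⊗ I` acting on the orientation qubit, where `H` is the
Hadamard gate and `Z` the Pauli-Z gate. -/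
def hzGate (n : ℕ) : Matrix (QIdx n) (QIdx n) ℂ :=
  Matrix.of fun p q =>
    if p.1 = q.1 ∧ p.2.2 = q.2.2 then
      (if p.2.1 = false ∧ q.2.1 = true then -((Real.sqrt 2 : ℂ))⁻¹ else ((Real.sqrt 2 : ℂ))⁻¹)
    else 0

/-!
If `τ` shares a facet with `σ`, exactly one of its two orientations is down-adjacent to `σ`, so
together they receive mass `|Δ_{τ,σ}| / K` in a step out of `σ`.  For the full Laplacian this
rests on a cancellation: when `σ` and `τ` have a common coface, the up and down contributions are
opposite, and this is exactly the case `σ ∼↑ τ̄` in which the walk forbids the step.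
Hence the mass leaving `σ` towards other simplices or staying put is `∑_τ |Δ_{τ,σ}| / K`.
This is at most `1` since the absolute column sums of `∂^* ∂` factor through the facets of `σ`,
and the absorbing state receives the defect.
-/

open Finset

section FinsetCovering

variable {α M : Type*} [DecidableEq α] {s t : Finset α} {a b : α}

lemma insert_ne_insert (ha : a ∉ s) (hab : a ≠ b) : insert a s ≠ insert b s := fun h =>
  hab ((insert_inj ha).1 h)

lemma insert_inter_insert (hab : a ≠ b) : insert a s ∩ insert b s = s := by
  grind

lemma insert_union_insert : insert a s ∪ insert b s = insert a (insert b s) := by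
  rw [insert_union, union_insert, union_self]

lemma insert_sdiff_insert_of_ne (ha : a ∉ s) (hab : a ≠ b) : insert a s \ insert b s = {a} := by
  grind

lemma sum_eq_sum_erase [Fintype α] [AddCommMonoid M] (f : Finset α → M)
    (hf : ∀ t, ¬ t ⋖ s → f t = 0) :
    ∑ t, f t = ∑ v ∈ s, f (s.erase v) := by
  refine (sum_of_injOn s.erase s.erase_injOn (fun _ _ => mem_coe.2 (mem_univ _))
    (fun t _ ht => hf t fun hts => ht ?_) fun _ _ => rfl).symm
  exact covBy_iff_exists_erase.1 hts

lemma sum_eq_sum_insert [Fintype α] [AddCommMonoid M] (f : Finset α → M)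
    (hf : ∀ t, ¬ s ⋖ t → f t = 0) :
    ∑ t, f t = ∑ v ∈ sᶜ, f (insert v s) := by
  refine (sum_of_injOn (fun v => insert v s) (insert_inj_on' s) (fun _ _ => mem_coe.2 (mem_univ _))
    (fun t _ ht => hf t fun hst => ht ?_) fun _ _ => rfl).symm
  simpa using covBy_iff_exists_insert.1 hst

/-- Two sets share a facet when their intersection is obtained from each of them by removing one
element; this is the unoriented relation underlying `DownAdj`. -/
def SharesFacet (s t : Finset α) : Prop := s ∩ t ⋖ s ∧ s ∩ t ⋖ t

lemma SharesFacet.exists_insert (h : SharesFacet s t) :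
    ∃ r a b, a ∉ r ∧ b ∉ r ∧ a ≠ b ∧ s = insert a r ∧ t = insert b r := by
  obtain ⟨a, ha, has⟩ := covBy_iff_exists_insert.1 h.1
  obtain ⟨b, hb, hbt⟩ := covBy_iff_exists_insert.1 h.2
  refine ⟨s ∩ t, a, b, ha, hb, ?_, has.symm, hbt.symm⟩
  rintro rfl
  exact ha (mem_inter.2 ⟨has ▸ mem_insert_self _ _, hbt ▸ mem_insert_self _ _⟩)

end FinsetCovering

lemma mem_stdSimplex_of_absorbing {α β : Type*} [Fintype α] [Fintype β] {S : Finset α}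
    {f : Option (α × β) → ℝ} {g : α → ℝ} {K : ℝ} (hf : ∀ x, 0 ≤ f (some x))
    (hsupp : ∀ τ ∉ S, ∀ s, f (some (τ, s)) = 0)
    (hfiber : ∀ τ ∈ S, ∑ s, f (some (τ, s)) = g τ / K)
    (hnone : f none = 1 - (∑ τ ∈ S, g τ) / K) (hK : 0 < K) (hgK : ∑ τ ∈ S, g τ ≤ K) :
    f ∈ stdSimplex ℝ (Option (α × β)) := by
  have hsum : ∑ x, f (some x) = (∑ τ ∈ S, g τ) / K := by
    rw [Fintype.sum_prod_type, sum_div, ← sum_congr rfl hfiber]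
    exact (sum_subset (subset_univ S) fun τ _ hτ => sum_eq_zero fun s _ => hsupp τ hτ s).symm
  have hnone_nonneg : 0 ≤ f none := hnone ▸ sub_nonneg.2 ((div_le_one hK).2 hgK)
  refine ⟨Option.rec hnone_nonneg hf, ?_⟩
  rw [Fintype.sum_option, hsum, hnone, sub_add_cancel]

section FaceSigns

variable {n : ℕ} {σ ρ : Finset (Fin n)} {a b v : Fin n}

/-- The incidence number of the facet `σ \ {v}` in `σ`, the sign `(-1)^j` where `v` is the `j`-th
vertex of `σ`.  It depends only on `σ \ {v}` and `v`, so both `σ` and `σ \ {v}` may be passed. -/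
def faceSign (σ : Finset (Fin n)) (v : Fin n) : ℝ := if faceFlip n σ v then -1 else 1

lemma neg_one_pow_card_filter_lt (σ : Finset (Fin n)) (v : Fin n) :
    (-1 : ℝ) ^ #{u ∈ σ | u < v} = faceSign σ v := by
  rw [faceSign, faceFlip, neg_one_pow_eq_ite]
  simp only [Nat.even_iff, decide_eq_true_eq]
  split_ifs <;> first | rfl | omega

lemma abs_faceSign (σ : Finset (Fin n)) (v : Fin n) : |faceSign σ v| = 1 := by
  unfold faceSign
  split_ifs <;> simp

lemma faceSign_sq (σ : Finset (Fin n)) (v : Fin n) : faceSign σ v ^ 2 = 1 := by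
  rw [← sq_abs, abs_faceSign, one_pow]

lemma faceFlip_insert (ha : a ∉ σ) (v : Fin n) :
    faceFlip n (insert a σ) v = xor (decide (a < v)) (faceFlip n σ v) := by
  unfold faceFlip
  rw [filter_insert]
  split_ifs with hav
  · rw [card_insert_of_notMem fun h => ha (mem_filter.1 h).1, decide_eq_true hav, Bool.true_xor,
      ← decide_not, decide_eq_decide]
    omega
  · rw [decide_eq_false hav, Bool.false_xor]

lemma faceFlip_insert_self (hv : v ∉ σ) : faceFlip n (insert v σ) v = faceFlip n σ v := by
  rw [faceFlip_insert hv, decide_eq_false (lt_irrefl v), Bool.false_xor]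

lemma faceSign_insert_self (hv : v ∉ σ) : faceSign (insert v σ) v = faceSign σ v := by
  rw [faceSign, faceFlip_insert_self hv, faceSign]

/-- The sign rule behind `∂ ∘ ∂ = 0`. -/
lemma xor_faceFlip_insert (ha : a ∉ ρ) (hb : b ∉ ρ) (hab : a ≠ b) :
    xor (faceFlip n (insert b ρ) a) (faceFlip n (insert a ρ) b) =
      !xor (faceFlip n ρ a) (faceFlip n ρ b) := by
  rw [faceFlip_insert ha, faceFlip_insert hb]
  rcases hab.lt_or_gt with h | h <;>
    simp [h, h.not_gt]

lemma faceSign_insert_mul_faceSign_insert (ha : a ∉ ρ) (hb : b ∉ ρ) (hab : a ≠ b) :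
    faceSign (insert b ρ) a * faceSign (insert a ρ) b = -(faceSign ρ a * faceSign ρ b) := by
  have h := xor_faceFlip_insert ha hb hab
  unfold faceSign
  revert h
  generalize faceFlip n (insert b ρ) a = x
  generalize faceFlip n (insert a ρ) b = y
  generalize faceFlip n ρ a = z
  generalize faceFlip n ρ b = u
  revert x y z u
  simp

end FaceSigns

section Boundary

variable {n k : ℕ} {X : Finset (Finset (Fin n))} {w : Fin n → ℝ} {σ ρ : Finset (Fin n)}
  {v : Fin n}

lemma mem_simplices : σ ∈ simplices n X k ↔ σ ∈ X ∧ #σ = k + 1 := mem_filter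

lemma nonempty_of_mem_simplices (hσ : σ ∈ simplices n X k) : σ.Nonempty :=
  card_pos.1 ((mem_simplices.1 hσ).2 ▸ k.succ_pos)

lemma covBy_of_boundary_ne_zero (h : boundary n X w k ρ σ ≠ 0) : ρ ⋖ σ := by
  obtain ⟨-, hσ, hρσ, hρ⟩ := (ite_ne_right_iff.1 h).1
  exact covBy_iff_card_sdiff_eq_one.2 ⟨hρσ, by rw [card_sdiff_of_subset hρσ]; omega⟩

lemma boundary_eq_zero_of_not_covBy (h : ¬ ρ ⋖ σ) : boundary n X w k ρ σ = 0 :=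
  not_not.1 (mt covBy_of_boundary_ne_zero h)

lemma boundary_insert (hv : v ∉ ρ) (hρ : #ρ = k) :
    boundary n X w k ρ (insert v ρ) = if insert v ρ ∈ X then faceSign ρ v * w v else 0 := by
  have hsdiff : insert v ρ \ ρ = {v} := by simp [hv]
  simp only [boundary, of_apply, card_insert_of_notMem hv, hρ, subset_insert, and_true, hsdiff,
    sum_singleton, neg_one_pow_card_filter_lt, faceSign_insert_self hv]

lemma boundary_erase (hσ : σ ∈ simplices n X k) (hv : v ∈ σ) :
    boundary n X w k (σ.erase v) σ = faceSign (σ.erase v) v * w v := by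
  obtain ⟨hσX, hσk⟩ := mem_simplices.1 hσ
  have hcard : #(σ.erase v) = k := by rw [card_erase_of_mem hv, hσk, Nat.add_sub_cancel]
  have h := boundary_insert (X := X) (w := w) (notMem_erase v σ) hcard
  rwa [insert_erase hv, if_pos hσX] at h

lemma abs_boundary_insert_le (hw : ∀ v, 0 ≤ w v) (hv : v ∉ ρ) :
    |boundary n X w k ρ (insert v ρ)| ≤ w v := by
  by_cases hρ : #ρ = k
  · rw [boundary_insert hv hρ]
    split_ifs
    · rw [abs_mul, abs_faceSign, one_mul, abs_of_nonneg (hw v)]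
    · rw [abs_zero]
      exact hw v
  · simp [boundary, hρ, hw v]

lemma abs_boundary_erase (hw : ∀ v, 0 ≤ w v) (hσ : σ ∈ simplices n X k) (hv : v ∈ σ) :
    |boundary n X w k (σ.erase v) σ| = w v := by
  rw [boundary_erase hσ hv, abs_mul, abs_faceSign, one_mul, abs_of_nonneg (hw v)]

lemma sum_abs_boundary_le (hw : ∀ v, 0 ≤ w v) (ρ : Finset (Fin n)) :
    ∑ τ, |boundary n X w k ρ τ| ≤ ∑ v ∈ ρᶜ, w v := by
  rw [sum_eq_sum_insert _ fun τ hτ => by rw [boundary_eq_zero_of_not_covBy hτ, abs_zero]]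
  exact sum_le_sum fun v hv => abs_boundary_insert_le hw (mem_compl.1 hv)

end Boundary

section Laplacians

variable {n k : ℕ} {X : Finset (Finset (Fin n))} {w : Fin n → ℝ} {σ τ ρ : Finset (Fin n)}
  {a b : Fin n}

lemma downLap_apply_self (hσ : σ ∈ simplices n X k) :
    downLap n X w k σ σ = ∑ v ∈ σ, w v ^ 2 := by
  simp only [downLap, mul_apply, transpose_apply, ← sq]
  rw [sum_eq_sum_erase _ fun ρ hρ => by rw [boundary_eq_zero_of_not_covBy hρ, sq, zero_mul]]
  refine sum_congr rfl fun v hv => ?_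
  rw [boundary_erase hσ hv, mul_pow, faceSign_sq, one_mul]

lemma upLap_apply_self (hσ : #σ = k + 1) :
    upLap n X w k σ σ = ∑ v ∈ upSet n X σ, w v ^ 2 := by
  have hup : upSet n X σ = {v ∈ σᶜ | insert v σ ∈ X} := by ext; simp [upSet]
  simp only [upLap, mul_apply, transpose_apply, ← sq]
  rw [sum_eq_sum_insert _ fun τ hτ => by rw [boundary_eq_zero_of_not_covBy hτ, sq, zero_mul],
    hup, sum_filter]
  refine sum_congr rfl fun v hv => ?_
  rw [boundary_insert (mem_compl.1 hv) hσ, ite_pow, mul_pow, faceSign_sq, one_mul,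
    zero_pow two_ne_zero]

lemma fullLap_apply_self (hσ : σ ∈ simplices n X k) :
    fullLap n X w k σ σ = ∑ u ∈ upSet n X σ, w u ^ 2 + ∑ v ∈ σ, w v ^ 2 := by
  rw [fullLap, Matrix.add_apply, upLap_apply_self (mem_simplices.1 hσ).2, downLap_apply_self hσ]

lemma downLap_apply_of_ne (h : σ ≠ τ) :
    downLap n X w k τ σ = boundary n X w k (σ ∩ τ) τ * boundary n X w k (σ ∩ τ) σ := by
  refine sum_eq_single (σ ∩ τ) (fun ρ _ hρ => ?_) fun h => absurd (mem_univ _) h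
  by_contra hne
  obtain ⟨hτ, hσ⟩ := mul_ne_zero_iff.1 hne
  exact hρ ((covBy_of_boundary_ne_zero hσ).wcovBy.inf_eq
    (covBy_of_boundary_ne_zero hτ).wcovBy h).symm

lemma upLap_apply_of_ne (h : σ ≠ τ) :
    upLap n X w k τ σ = boundary n X w (k + 1) τ (σ ∪ τ) * boundary n X w (k + 1) σ (σ ∪ τ) := by
  refine sum_eq_single (σ ∪ τ) (fun ν _ hν => ?_) fun h => absurd (mem_univ _) h
  by_contra hne
  obtain ⟨hτ, hσ⟩ := mul_ne_zero_iff.1 hne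
  exact hν ((covBy_of_boundary_ne_zero hσ).wcovBy.sup_eq
    (covBy_of_boundary_ne_zero hτ).wcovBy h).symm

lemma downLap_eq_zero_of_not_sharesFacet (h : σ ≠ τ) (hf : ¬ SharesFacet σ τ) :
    downLap n X w k τ σ = 0 := by
  rw [downLap_apply_of_ne h]
  by_contra hne
  obtain ⟨hτ, hσ⟩ := mul_ne_zero_iff.1 hne
  exact hf ⟨covBy_of_boundary_ne_zero hσ, covBy_of_boundary_ne_zero hτ⟩

lemma upLap_eq_zero_of_not_sharesFacet (h : σ ≠ τ) (hf : ¬ SharesFacet σ τ) :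
    upLap n X w k τ σ = 0 := by
  rw [upLap_apply_of_ne h]
  by_contra hne
  obtain ⟨hτ, hσ⟩ := mul_ne_zero_iff.1 hne
  have hσ' : σ ⋖ σ ⊔ τ := covBy_of_boundary_ne_zero hσ
  have hτ' : τ ⋖ σ ⊔ τ := covBy_of_boundary_ne_zero hτ
  exact hf ⟨inf_covBy_of_covBy_sup_of_covBy_sup_left hσ' hτ',
    inf_covBy_of_covBy_sup_of_covBy_sup_right hσ' hτ'⟩

lemma downLap_insert_insert (ha : a ∉ ρ) (hb : b ∉ ρ) (hab : a ≠ b)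
    (haX : insert a ρ ∈ simplices n X k) (hbX : insert b ρ ∈ simplices n X k) :
    downLap n X w k (insert b ρ) (insert a ρ) =
      faceSign ρ a * faceSign ρ b * (w a * w b) := by
  obtain ⟨haX, hcard⟩ := mem_simplices.1 haX
  rw [card_insert_of_notMem ha, Nat.add_right_cancel_iff] at hcard
  rw [downLap_apply_of_ne (insert_ne_insert ha hab), insert_inter_insert hab,
    boundary_insert ha hcard, boundary_insert hb hcard, if_pos haX,
    if_pos (mem_simplices.1 hbX).1]
  ring

lemma upLap_insert_insert (ha : a ∉ ρ) (hb : b ∉ ρ) (hab : a ≠ b) (hρ : #ρ = k) :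
    upLap n X w k (insert b ρ) (insert a ρ) =
      if insert a (insert b ρ) ∈ X then -(faceSign ρ a * faceSign ρ b * (w a * w b)) else 0 := by
  have ha' : a ∉ insert b ρ := by simp [ha, hab]
  have hb' : b ∉ insert a ρ := by simp [hb, hab.symm]
  have hcoface_a := boundary_insert (X := X) (w := w) ha' (by rw [card_insert_of_notMem hb, hρ])
  have hcoface_b := boundary_insert (X := X) (w := w) hb' (by rw [card_insert_of_notMem ha, hρ])
  rw [insert_comm] at hcoface_b
  rw [upLap_apply_of_ne (insert_ne_insert ha hab), insert_union_insert, hcoface_a, hcoface_b]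
  split_ifs
  · linear_combination w a * w b * faceSign_insert_mul_faceSign_insert ha hb hab
  · rw [mul_zero]

lemma fullLap_apply_of_ne (hσ : σ ∈ simplices n X k) (hτ : τ ∈ simplices n X k) (h : σ ≠ τ) :
    fullLap n X w k τ σ = if σ ∪ τ ∈ X then 0 else downLap n X w k τ σ := by
  rw [fullLap, Matrix.add_apply]
  by_cases hf : SharesFacet σ τ
  · obtain ⟨ρ, a, b, ha, hb, hab, rfl, rfl⟩ := hf.exists_insert
    have hcard := (mem_simplices.1 hσ).2
    rw [card_insert_of_notMem ha, Nat.add_right_cancel_iff] at hcard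
    rw [upLap_insert_insert ha hb hab hcard, downLap_insert_insert ha hb hab hσ hτ,
      insert_union_insert]
    split_ifs
    · rw [neg_add_cancel]
    · rw [zero_add]
  · rw [upLap_eq_zero_of_not_sharesFacet h hf, downLap_eq_zero_of_not_sharesFacet h hf, zero_add,
      ite_self]

end Laplacians

section Adjacency

variable {n k : ℕ} {X : Finset (Finset (Fin n))} {w : Fin n → ℝ} {ρ : Finset (Fin n)}
  {σ σ' : OSimp n} {a b : Fin n} {s t : Bool}

lemma xor_eq_xor_iff {s t x y : Bool} : xor s x = xor t y ↔ t = xor s (xor x y) := by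
  revert s t x y
  decide

lemma DownAdj.sharesFacet (h : DownAdj n σ σ') : SharesFacet σ.1 σ'.1 := by
  obtain ⟨-, hinter, hcard, -⟩ := h
  constructor <;> rw [covBy_iff_card_sdiff_eq_one]
  · exact ⟨inter_subset_left, by rw [card_sdiff_of_subset inter_subset_left]; omega⟩
  · exact ⟨inter_subset_right, by rw [card_sdiff_of_subset inter_subset_right]; omega⟩

lemma UpAdj.sharesFacet (h : UpAdj n X σ σ') : SharesFacet σ.1 σ'.1 := by
  obtain ⟨-, -, hunion, hcard, -⟩ := h
  have hσ : σ.1 ⋖ σ.1 ⊔ σ'.1 := covBy_iff_card_sdiff_eq_one.2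
    ⟨subset_union_left, by rw [sup_eq_union, card_sdiff_of_subset subset_union_left]; omega⟩
  have hσ' : σ'.1 ⋖ σ.1 ⊔ σ'.1 := covBy_iff_card_sdiff_eq_one.2
    ⟨subset_union_right, by rw [sup_eq_union, card_sdiff_of_subset subset_union_right]; omega⟩
  exact ⟨inf_covBy_of_covBy_sup_of_covBy_sup_left hσ hσ',
    inf_covBy_of_covBy_sup_of_covBy_sup_right hσ hσ'⟩

lemma downAdj_insert_iff (ha : a ∉ ρ) (hb : b ∉ ρ) (hab : a ≠ b) :
    DownAdj n (insert a ρ, s) (insert b ρ, t) ↔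
      t = xor s (xor (faceFlip n ρ a) (faceFlip n ρ b)) := by
  simp only [DownAdj, ne_eq, insert_ne_insert ha hab, not_false_eq_true, insert_inter_insert hab,
    card_insert_of_notMem ha, card_insert_of_notMem hb, insert_sdiff_insert_of_ne ha hab,
    insert_sdiff_insert_of_ne hb hab.symm, mem_singleton, forall_eq, faceFlip_insert_self ha,
    faceFlip_insert_self hb, true_and, xor_eq_xor_iff]

lemma upAdj_insert_iff (ha : a ∉ ρ) (hb : b ∉ ρ) (hab : a ≠ b) :
    UpAdj n X (insert a ρ, s) (insert b ρ, t) ↔ insert a (insert b ρ) ∈ X ∧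
      t = xor s (!xor (faceFlip n ρ a) (faceFlip n ρ b)) := by
  have ha' : a ∉ insert b ρ := by simp [ha, hab]
  have hb' : b ∉ insert a ρ := by simp [hb, hab.symm]
  have hflip_b : faceFlip n (insert a (insert b ρ)) b = faceFlip n (insert a ρ) b := by
    rw [insert_comm, faceFlip_insert_self hb']
  simp only [UpAdj, ne_eq, insert_ne_insert ha hab, not_false_eq_true, insert_union_insert,
    card_insert_of_notMem ha', card_insert_of_notMem ha, card_insert_of_notMem hb,
    insert_sdiff_insert_of_ne ha hab, insert_sdiff_insert_of_ne hb hab.symm, mem_singleton,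
    forall_eq, hflip_b, faceFlip_insert_self ha', true_and, xor_eq_xor_iff]
  rw [Bool.xor_comm (faceFlip n (insert a ρ) b), xor_faceFlip_insert ha hb hab]

lemma upAdj_reverse_iff :
    UpAdj n X σ (σ'.1, !σ'.2) ↔ σ.1 ∪ σ'.1 ∈ X ∧ DownAdj n σ σ' := by
  obtain ⟨σ, s⟩ := σ
  obtain ⟨τ, t⟩ := σ'
  by_cases hf : SharesFacet σ τ
  · obtain ⟨ρ, a, b, ha, hb, hab, rfl, rfl⟩ := hf.exists_insert
    rw [upAdj_insert_iff ha hb hab, downAdj_insert_iff ha hb hab, insert_union_insert,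
      Bool.xor_not, Bool.not_inj_iff]
  · exact iff_of_false (fun h => hf h.sharesFacet) fun h => hf h.2.sharesFacet

lemma sum_ite_downAdj (hw : ∀ v, 0 ≤ w v) {σ τ : Finset (Fin n)} (hσ : σ ∈ simplices n X k)
    (hτ : τ ∈ simplices n X k) (h : σ ≠ τ) (s : Bool) :
    ∑ t, (if DownAdj n (σ, s) (τ, t) then (∑ v ∈ σ \ τ, w v) * ∑ v ∈ τ \ σ, w v else 0) =
      |downLap n X w k τ σ| := by
  by_cases hf : SharesFacet σ τ
  · obtain ⟨ρ, a, b, ha, hb, hab, rfl, rfl⟩ := hf.exists_insert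
    simp only [downAdj_insert_iff ha hb hab, insert_sdiff_insert_of_ne ha hab,
      insert_sdiff_insert_of_ne hb hab.symm, sum_singleton]
    rw [sum_ite_eq', if_pos (mem_univ _), downLap_insert_insert ha hb hab hσ hτ, abs_mul, abs_mul,
      abs_faceSign, abs_faceSign, one_mul, one_mul, abs_of_nonneg (mul_nonneg (hw a) (hw b))]
  · rw [downLap_eq_zero_of_not_sharesFacet h hf, abs_zero]
    exact sum_eq_zero fun t _ => if_neg fun hadj => hf hadj.sharesFacet

end Adjacency

section ColumnSums

variable {n k : ℕ} {X : Finset (Finset (Fin n))} {w : Fin n → ℝ} {σ : Finset (Fin n)}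

lemma le_sSup_simplices (f : Finset (Fin n) → ℝ) (hσ : σ ∈ simplices n X k) :
    f σ ≤ sSup {x : ℝ | ∃ σ ∈ X, #σ = k + 1 ∧ x = f σ} := by
  obtain ⟨hσX, hσk⟩ := mem_simplices.1 hσ
  refine le_csSup ((Set.finite_range f).subset ?_).bddAbove ⟨σ, hσX, hσk, rfl⟩
  rintro _ ⟨σ, -, -, rfl⟩
  exact Set.mem_range_self σ

lemma sum_abs_downLap_le (hw : ∀ v, 0 ≤ w v) (hσ : σ ∈ simplices n X k) :
    ∑ τ ∈ simplices n X k, |downLap n X w k τ σ| ≤ ∑ u ∈ σ, ∑ v ∈ (σ.erase u)ᶜ, w u * w v :=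
  calc ∑ τ ∈ simplices n X k, |downLap n X w k τ σ|
    _ ≤ ∑ τ, |downLap n X w k τ σ| :=
      sum_le_univ_sum_of_nonneg fun _ => abs_nonneg _
    _ ≤ ∑ τ, ∑ ρ, |boundary n X w k ρ σ| * |boundary n X w k ρ τ| := by
      simp only [downLap, mul_apply, transpose_apply, ← abs_mul, mul_comm (boundary n X w k _ σ)]
      exact sum_le_sum fun τ _ => abs_sum_le_sum_abs _ _
    _ = ∑ ρ, |boundary n X w k ρ σ| * ∑ τ, |boundary n X w k ρ τ| := by
      rw [sum_comm]
      simp only [mul_sum]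
    _ = ∑ u ∈ σ, |boundary n X w k (σ.erase u) σ| * ∑ τ, |boundary n X w k (σ.erase u) τ| :=
      sum_eq_sum_erase _ fun ρ hρ => by
        rw [boundary_eq_zero_of_not_covBy hρ, abs_zero, zero_mul]
    _ ≤ ∑ u ∈ σ, ∑ v ∈ (σ.erase u)ᶜ, w u * w v := by
      refine sum_le_sum fun u hu => ?_
      rw [abs_boundary_erase hw hσ hu, ← mul_sum]
      exact mul_le_mul_of_nonneg_left (sum_abs_boundary_le hw _) (hw u)

lemma sum_mul_compl_erase (w : Fin n → ℝ) (σ : Finset (Fin n)) :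
    ∑ u ∈ σ, ∑ v ∈ (σ.erase u)ᶜ, w u * w v =
      ∑ v ∈ σ, w v ^ 2 + ∑ u ∈ σᶜ, ∑ v ∈ σ, w u * w v := by
  rw [sum_comm (s := σᶜ), ← sum_add_distrib]
  refine sum_congr rfl fun u hu => ?_
  rw [compl_erase, sum_insert (by simpa using hu), sq]
  simp only [mul_comm (w u)]

lemma sum_abs_fullLap_le_add_sum_abs_downLap (hσ : σ ∈ simplices n X k) :
    ∑ τ ∈ simplices n X k, |fullLap n X w k τ σ| ≤
      ∑ v ∈ σᶜ, w v ^ 2 + ∑ τ ∈ simplices n X k, |downLap n X w k τ σ| := by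
  have hsq : ∀ s : Finset (Fin n), 0 ≤ ∑ v ∈ s, w v ^ 2 :=
    fun s => sum_nonneg fun v _ => sq_nonneg _
  have hdiag : |fullLap n X w k σ σ| ≤ ∑ v ∈ σᶜ, w v ^ 2 + |downLap n X w k σ σ| := by
    rw [fullLap_apply_self hσ, downLap_apply_self hσ,
      abs_of_nonneg (add_nonneg (hsq _) (hsq _)), abs_of_nonneg (hsq _)]
    have hup : upSet n X σ ⊆ σᶜ := fun v hv => mem_compl.2 (mem_filter.1 hv).2.1
    gcongr
  have hoff : ∀ τ ∈ (simplices n X k).erase σ,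
      |fullLap n X w k τ σ| ≤ |downLap n X w k τ σ| := by
    intro τ hτ
    obtain ⟨hne, hτ⟩ := mem_erase.1 hτ
    rw [fullLap_apply_of_ne hσ hτ hne.symm]
    split_ifs
    · rw [abs_zero]
      exact abs_nonneg _
    · rfl
  rw [← add_sum_erase _ _ hσ, ← add_sum_erase _ (fun τ => |downLap n X w k τ σ|) hσ, ← add_assoc]
  exact add_le_add hdiag (sum_le_sum hoff)

lemma sum_abs_fullLap_le (hw : ∀ v, 0 ≤ w v) (hσ : σ ∈ simplices n X k) :
    ∑ τ ∈ simplices n X k, |fullLap n X w k τ σ| ≤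
      ∑ v, w v ^ 2 + ∑ u ∈ σᶜ, ∑ v ∈ σ, w u * w v :=
  calc ∑ τ ∈ simplices n X k, |fullLap n X w k τ σ|
    _ ≤ ∑ v ∈ σᶜ, w v ^ 2 + ∑ τ ∈ simplices n X k, |downLap n X w k τ σ| :=
      sum_abs_fullLap_le_add_sum_abs_downLap hσ
    _ ≤ ∑ v ∈ σᶜ, w v ^ 2 + ∑ u ∈ σ, ∑ v ∈ (σ.erase u)ᶜ, w u * w v := by
      gcongr
      exact sum_abs_downLap_le hw hσ
    _ = ∑ v, w v ^ 2 + ∑ u ∈ σᶜ, ∑ v ∈ σ, w u * w v := by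
      rw [sum_mul_compl_erase, ← add_assoc, sum_compl_add_sum]

lemma sum_abs_downLap_le_Kdown (hw : ∀ v, 0 ≤ w v) (hσ : σ ∈ simplices n X k) :
    ∑ τ ∈ simplices n X k, |downLap n X w k τ σ| ≤ Kdown n X w k :=
  (sum_abs_downLap_le hw hσ).trans
    (le_sSup_simplices (fun σ => ∑ u ∈ σ, ∑ v ∈ (σ.erase u)ᶜ, w u * w v) hσ)

lemma sum_abs_fullLap_le_Kfull (hw : ∀ v, 0 ≤ w v) (hσ : σ ∈ simplices n X k) :
    ∑ τ ∈ simplices n X k, |fullLap n X w k τ σ| ≤ Kfull n X w k :=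
  (sum_abs_fullLap_le hw hσ).trans
    (le_sSup_simplices (fun σ => ∑ v, w v ^ 2 + ∑ u ∈ σᶜ, ∑ v ∈ σ, w u * w v) hσ)

lemma Kdown_pos (hw : ∀ v, 0 < w v) (hne : (simplices n X k).Nonempty) : 0 < Kdown n X w k := by
  obtain ⟨σ, hσ⟩ := hne
  refine lt_of_lt_of_le ?_
    (le_sSup_simplices (fun σ => ∑ u ∈ σ, ∑ v ∈ (σ.erase u)ᶜ, w u * w v) hσ)
  exact sum_pos (fun u _ => sum_pos (fun v _ => mul_pos (hw u) (hw v)) ⟨u, by simp⟩)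
    (nonempty_of_mem_simplices hσ)

lemma Kfull_pos (hw : ∀ v, 0 < w v) (hne : (simplices n X k).Nonempty) : 0 < Kfull n X w k := by
  obtain ⟨σ, hσ⟩ := hne
  refine lt_of_lt_of_le ?_
    (le_sSup_simplices (fun σ => ∑ v, w v ^ 2 + ∑ u ∈ σᶜ, ∑ v ∈ σ, w u * w v) hσ)
  refine add_pos_of_pos_of_nonneg ?_
    (sum_nonneg fun u _ => sum_nonneg fun v _ => (mul_pos (hw u) (hw v)).le)
  exact sum_pos (fun v _ => pow_pos (hw v) 2)
    ((nonempty_of_mem_simplices hσ).mono (subset_univ σ))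

end ColumnSums

section Rows

variable {n k : ℕ} {X : Finset (Finset (Fin n))} {w : Fin n → ℝ} {σ σ' : OSimp n}
  {τ : Finset (Fin n)} {x : SState n}

lemma Pdown_some_some_nonneg (hw : ∀ v, 0 ≤ w v) (hK : 0 ≤ Kdown n X w k) (σ σ' : OSimp n) :
    0 ≤ Pdown n X w k (some σ) (some σ') := by
  have hsum : ∀ s : Finset (Fin n), 0 ≤ ∑ v ∈ s, w v := fun s => sum_nonneg fun v _ => hw v
  simp only [Pdown]
  split_ifs
  · exact div_nonneg (sum_nonneg fun v _ => sq_nonneg _) hK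
  · exact div_nonneg (mul_nonneg (hsum _) (hsum _)) hK
  all_goals rfl

lemma Pharm_some_some_nonneg (hw : ∀ v, 0 ≤ w v) (hK : 0 ≤ Kfull n X w k) (σ σ' : OSimp n) :
    0 ≤ Pharm n X w k (some σ) (some σ') := by
  have hsum : ∀ s : Finset (Fin n), 0 ≤ ∑ v ∈ s, w v := fun s => sum_nonneg fun v _ => hw v
  have hsq : ∀ s : Finset (Fin n), 0 ≤ ∑ v ∈ s, w v ^ 2 :=
    fun s => sum_nonneg fun v _ => sq_nonneg _
  simp only [Pharm]
  split_ifs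
  · exact div_nonneg (add_nonneg (hsq _) (hsq _)) hK
  · exact div_nonneg (mul_nonneg (hsum _) (hsum _)) hK
  all_goals rfl

lemma Pdown_eq_zero_of_notMem (h : σ'.1 ∉ simplices n X k) :
    Pdown n X w k (some σ) (some σ') = 0 :=
  if_neg fun hvalid => h (mem_simplices.2 hvalid.2.2)

lemma Pharm_eq_zero_of_notMem (h : σ'.1 ∉ simplices n X k) :
    Pharm n X w k (some σ) (some σ') = 0 :=
  if_neg fun hvalid => h (mem_simplices.2 hvalid.2.2)

lemma sum_Pdown_orientation (hw : ∀ v, 0 ≤ w v) (hσ : σ.1 ∈ simplices n X k)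
    (hτ : τ ∈ simplices n X k) :
    ∑ t, Pdown n X w k (some σ) (some (τ, t)) = |downLap n X w k τ σ.1| / Kdown n X w k := by
  obtain ⟨σ, s⟩ := σ
  have hvalid : σ ∈ X ∧ #σ = k + 1 ∧ τ ∈ X ∧ #τ = k + 1 :=
    and_assoc.1 ⟨mem_simplices.1 hσ, mem_simplices.1 hτ⟩
  simp only [Pdown, if_pos hvalid, Prod.mk.injEq]
  obtain rfl | hne := eq_or_ne σ τ
  · have hnot_adj : ∀ t, ¬ DownAdj n (σ, s) (σ, t) := fun t h => h.1 rfl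
    simp only [true_and, hnot_adj, if_false, sum_ite_eq, mem_univ, if_true, downLap_apply_self hσ,
      abs_of_nonneg (sum_nonneg fun v (_ : v ∈ σ) => sq_nonneg (w v))]
  · simp only [hne, false_and, if_false]
    rw [← sum_ite_downAdj hw hσ hτ hne s, sum_div]
    simp only [ite_div, zero_div]

lemma sum_Pharm_orientation (hw : ∀ v, 0 ≤ w v) (hσ : σ.1 ∈ simplices n X k)
    (hτ : τ ∈ simplices n X k) :
    ∑ t, Pharm n X w k (some σ) (some (τ, t)) = |fullLap n X w k τ σ.1| / Kfull n X w k := by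
  obtain ⟨σ, s⟩ := σ
  have hvalid : σ ∈ X ∧ #σ = k + 1 ∧ τ ∈ X ∧ #τ = k + 1 :=
    and_assoc.1 ⟨mem_simplices.1 hσ, mem_simplices.1 hτ⟩
  simp only [Pharm, if_pos hvalid, Prod.mk.injEq]
  obtain rfl | hne := eq_or_ne σ τ
  · have hnot_adj : ∀ t, ¬ DownAdj n (σ, s) (σ, t) := fun t h => h.1 rfl
    have hdiag : 0 ≤ ∑ u ∈ upSet n X σ, w u ^ 2 + ∑ v ∈ σ, w v ^ 2 := by positivity
    simp only [true_and, hnot_adj, false_and, if_false, sum_ite_eq, mem_univ, if_true,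
      fullLap_apply_self hσ, abs_of_nonneg hdiag]
  · have hadj : ∀ t, DownAdj n (σ, s) (τ, t) ∧ ¬ UpAdj n X (σ, s) (τ, !t) ↔
        σ ∪ τ ∉ X ∧ DownAdj n (σ, s) (τ, t) := by
      intro t
      have h := upAdj_reverse_iff (X := X) (σ := (σ, s)) (σ' := (τ, t))
      tauto
    simp only [hne, false_and, if_false, hadj]
    rw [fullLap_apply_of_ne hσ hτ hne]
    by_cases hcoface : σ ∪ τ ∈ X
    · simp only [hcoface, not_true_eq_false, false_and, if_false, if_true, sum_const_zero, abs_zero,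
        zero_div]
    · simp only [hcoface, not_false_eq_true, true_and, if_false]
      rw [← sum_ite_downAdj hw hσ hτ hne s, sum_div]
      simp only [ite_div, zero_div]

lemma Pdown_mem_stdSimplex (hw : ∀ v, 0 ≤ w v) (hK : 0 < Kdown n X w k) (hx : valid n X k x) :
    Pdown n X w k x ∈ stdSimplex ℝ (SState n) := by
  cases x with
  | none =>
    have hrow : Pdown n X w k none = Pi.single none 1 := by
      ext (_ | _) <;> simp [Pdown]
    exact hrow ▸ single_mem_stdSimplex ℝ none
  | some σ =>
    have hσ : σ.1 ∈ simplices n X k := mem_simplices.2 hx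
    exact mem_stdSimplex_of_absorbing (Pdown_some_some_nonneg hw hK.le σ)
      (fun τ hτ t => Pdown_eq_zero_of_notMem hτ)
      (fun τ hτ => sum_Pdown_orientation hw hσ hτ) (if_pos hx) hK (sum_abs_downLap_le_Kdown hw hσ)

lemma Pharm_mem_stdSimplex (hw : ∀ v, 0 ≤ w v) (hK : 0 < Kfull n X w k) (hx : valid n X k x) :
    Pharm n X w k x ∈ stdSimplex ℝ (SState n) := by
  cases x with
  | none =>
    have hrow : Pharm n X w k none = Pi.single none 1 := by
      ext (_ | _) <;> simp [Pharm]
    exact hrow ▸ single_mem_stdSimplex ℝ none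
  | some σ =>
    have hσ : σ.1 ∈ simplices n X k := mem_simplices.2 hx
    exact mem_stdSimplex_of_absorbing (Pharm_some_some_nonneg hw hK.le σ)
      (fun τ hτ t => Pharm_eq_zero_of_notMem hτ)
      (fun τ hτ => sum_Pharm_orientation hw hσ hτ) (if_pos hx) hK (sum_abs_fullLap_le_Kfull hw hσ)

end Rows

theorem Pdown_Pharm_row_stochastic_general (n k : ℕ) (X : Finset (Finset (Fin n)))
    (w : Fin n → ℝ) (hw : ∀ v, 0 ≤ w v) (hKdown : 0 < Kdown n X w k)
    (hKfull : 0 < Kfull n X w k) :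
    ∀ σ : SState n, valid n X k σ →
      ((∀ σ' : SState n, 0 ≤ Pdown n X w k σ σ' ∧ Pdown n X w k σ σ' ≤ 1) ∧
        ∑ σ' : SState n, Pdown n X w k σ σ' = 1) ∧
      ((∀ σ' : SState n, 0 ≤ Pharm n X w k σ σ' ∧ Pharm n X w k σ σ' ≤ 1) ∧
        ∑ σ' : SState n, Pharm n X w k σ σ' = 1) := by
  intro σ hσ
  have hdown := Pdown_mem_stdSimplex hw hKdown hσ
  have hharm := Pharm_mem_stdSimplex hw hKfull hσ
  exact ⟨⟨mem_Icc_of_mem_stdSimplex hdown, hdown.2⟩, mem_Icc_of_mem_stdSimplex hharm, hharm.2⟩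

/-- The down-walk transition matrix `P^{down}` and the harmonic-walk
transition matrix `P` on `S_k = X_k^± ∪ {Θ}` are row-stochastic: every entry lies in
`[0,1]` and every row sums to `1`. -/
theorem Pdown_Pharm_row_stochastic (n k : ℕ) (X : Finset (Finset (Fin n)))
    (hX : IsComplex n X) (w : Fin n → ℝ) (hw : ∀ v, 0 < w v)
    (hne : (simplices n X k).Nonempty) :
    ∀ σ : SState n, valid n X k σ →
      ((∀ σ' : SState n, 0 ≤ Pdown n X w k σ σ' ∧ Pdown n X w k σ σ' ≤ 1) ∧
        ∑ σ' : SState n, Pdown n X w k σ σ' = 1) ∧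
      ((∀ σ' : SState n, 0 ≤ Pharm n X w k σ σ' ∧ Pharm n X w k σ σ' ≤ 1) ∧
        ∑ σ' : SState n, Pharm n X w k σ σ' = 1) :=
  Pdown_Pharm_row_stochastic_general n k X w (fun v => (hw v).le) (Kdown_pos hw hne)
    (Kfull_pos hw hne)

end QWSC
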